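/- There exists a constant C > 0, depending only on n, such that for every λ > 0 and every smooth ℤⁿ-periodic φ : ℝⁿ → ℝ with Δφ = −λ²φ and ∫_Q φ(x)² dx = 1, one has sup_{x ∈ ℝⁿ} ‖∇φ(x)‖ ≤ C λ^{(n+1)/2}. -/

import Mathlib

/-!
Integrating by parts over the unit cube, where the boundary terms on opposite faces cancel by
periodicity, shows that the Fourier coefficients of `Δf` are those of `f` multiplied by
`-(2π|k|)²`. An eigenfunction `Δf = -λ²f` is therefore a finite sum `∑ c_k e^{2πi⟨k, x⟩}` over the
lattice points `k` on the sphere of radius `r = λ / 2π`. Each plane wave in it has a derivative of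
norm at most `2π|k| = λ`, so by Cauchy–Schwarz and Parseval
`‖∇f‖ ≤ λ ∑ |c_k| ≤ λ √N ‖f‖_{L²}`, where `N` is the number of these lattice points.

The last `n - 1` coordinates of a lattice point on the sphere are integers in `[-r, r]` and
determine its first coordinate up to sign, so `N ≤ 2 (2r + 1)^(n-1)`. If the sphere contains a
lattice point at all then `r ≥ 1`, which gives `N ≤ 2 (3r)^(n-1)` and hence the power
`λ · λ^((n-1)/2) = λ^((n+1)/2)`.
-/

open MeasureTheory Real Set

noncomputable section

/-- The Euclidean Laplacian `Δφ = Σᵢ ∂²φ/∂xᵢ²`. -/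
def lap {n : ℕ} (φ : EuclideanSpace ℝ (Fin n) → ℝ) (x : EuclideanSpace ℝ (Fin n)) : ℝ :=
  ∑ i : Fin n,
    fderiv ℝ (fun y => fderiv ℝ φ y (EuclideanSpace.single i 1)) x (EuclideanSpace.single i 1)

/-- `ℤⁿ`-periodicity of a function on `ℝⁿ`. -/
def ZPeriodic {n : ℕ} (φ : EuclideanSpace ℝ (Fin n) → ℝ) : Prop :=
  ∀ (x : EuclideanSpace ℝ (Fin n)) (k : Fin n → ℤ),
    φ (x + (WithLp.equiv 2 (Fin n → ℝ)).symm fun i => (k i : ℝ)) = φ x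

/-- The fundamental domain `Q = [0,1)ⁿ`. -/
def Qcube (n : ℕ) : Set (EuclideanSpace ℝ (Fin n)) :=
  {x | ∀ i, x i ∈ Set.Ico (0 : ℝ) 1}

open scoped Laplacian RealInnerProductSpace

-- Mathlib's Fourier analysis on `UnitAddTorus` uses this Haar measure, through a local instance.
attribute [local instance] instMeasureSpaceUnitAddCircle

section PlaneWaves

variable {E : Type*} [NormedAddCommGroup E] [InnerProductSpace ℝ E]

/-- The plane wave `x ↦ exp (2πi⟪ξ, x⟫)` with frequency `ξ`, the building block of Fourier series.
The frequency counts periods, so the wave number is `2π‖ξ‖`. -/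
def planeWave (ξ x : E) : ℂ :=
  fourierChar ⟪ξ, x⟫

theorem norm_planeWave (ξ x : E) : ‖planeWave ξ x‖ = 1 :=
  Circle.norm_coe _

theorem contDiff_planeWave (ξ : E) {k : WithTop ℕ∞} : ContDiff ℝ k (planeWave ξ) := by
  have hphase : ContDiff ℝ k fun x : E => 2 * π * ⟪ξ, x⟫ :=
    contDiff_const.mul (innerSL ℝ ξ).contDiff
  simpa only [planeWave, fourierChar_apply] using!
    ((Complex.ofRealCLM.contDiff.comp hphase).mul contDiff_const).cexp

theorem fderiv_planeWave_apply (ξ x v : E) :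
    fderiv ℝ (planeWave ξ) x v = 2 * π * Complex.I * ⟪ξ, v⟫ * planeWave ξ x := by
  have h := (hasDerivAt_fourierChar (innerSL ℝ ξ x)).hasFDerivAt.comp x (innerSL ℝ ξ).hasFDerivAt
  change fderiv ℝ ((fun t : ℝ => (fourierChar t : ℂ)) ∘ innerSL ℝ ξ) x v = _
  rw [h.fderiv]
  simp [planeWave]
  ring

theorem norm_fderiv_planeWave_le (ξ x : E) : ‖fderiv ℝ (planeWave ξ) x‖ ≤ 2 * π * ‖ξ‖ := by
  refine ContinuousLinearMap.opNorm_le_bound _ (by positivity) fun v => ?_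
  calc ‖fderiv ℝ (planeWave ξ) x v‖ = 2 * π * |⟪ξ, v⟫| := by
        simp [fderiv_planeWave_apply, norm_planeWave, abs_of_pos pi_pos]
    _ ≤ 2 * π * (‖ξ‖ * ‖v‖) := by gcongr; exact abs_real_inner_le_norm ξ v
    _ = 2 * π * ‖ξ‖ * ‖v‖ := by ring

theorem norm_fderiv_sum_planeWave_le {ι : Type*} {S : Finset ι} {ξ : ι → E} {r : ℝ}
    (hξ : ∀ i ∈ S, ‖ξ i‖ ≤ r) (c : ι → ℂ) (x : E) :
    ‖fderiv ℝ (fun y => ∑ i ∈ S, c i * planeWave (ξ i) y) x‖ ≤ 2 * π * r * ∑ i ∈ S, ‖c i‖ := by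
  have hdiff (i : ι) : DifferentiableAt ℝ (planeWave (ξ i)) x :=
    (contDiff_planeWave (ξ i)).differentiable one_ne_zero x
  rw [fderiv_fun_sum fun i _ => (hdiff i).const_mul (c i), Finset.mul_sum]
  refine norm_sum_le_of_le _ fun i hi => ?_
  rw [fderiv_const_mul (hdiff i), norm_smul, mul_comm]
  gcongr
  exact (norm_fderiv_planeWave_le _ x).trans (by gcongr; exact hξ i hi)

end PlaneWaves

section Lattice

variable {n : ℕ} {r : ℝ} {k : Fin n → ℤ}

/-- The integer vector `k` as a point of Euclidean space: a period of the functions considered here,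
or the frequency of a periodic plane wave. -/
def latticePoint (k : Fin n → ℤ) : EuclideanSpace ℝ (Fin n) :=
  WithLp.toLp 2 fun i => (k i : ℝ)

theorem latticePoint_neg (k : Fin n → ℤ) : latticePoint (-k) = -latticePoint k := by
  ext i
  simp [latticePoint]

/-- The integer vectors of Euclidean length `r`, the possible frequencies of an eigenfunction with
eigenvalue `-(2πr)²`. -/
def latticeSphere (n : ℕ) (r : ℝ) : Set (Fin n → ℤ) :=
  {k | ‖latticePoint k‖ = r}

theorem sum_sq_of_mem_latticeSphere (hk : k ∈ latticeSphere n r) :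
    ∑ i, (k i : ℝ) ^ 2 = r ^ 2 := by
  rw [← show ‖latticePoint k‖ = r from hk, EuclideanSpace.real_norm_sq_eq]
  rfl

theorem abs_apply_le_of_mem_latticeSphere (hk : k ∈ latticeSphere n r) (i : Fin n) :
    |(k i : ℝ)| ≤ r :=
  (PiLp.norm_apply_le (latticePoint k) i).trans_eq hk

theorem apply_mem_Icc_of_mem_latticeSphere (hk : k ∈ latticeSphere n r) (i : Fin n) :
    k i ∈ Finset.Icc (-(⌊r⌋₊ : ℤ)) ⌊r⌋₊ := by
  have hfloor : (k i).natAbs ≤ ⌊r⌋₊ := Nat.le_floor <| by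
    simpa [Nat.cast_natAbs] using abs_apply_le_of_mem_latticeSphere hk i
  rw [Finset.mem_Icc]
  omega

theorem finite_latticeSphere (n : ℕ) (r : ℝ) : (latticeSphere n r).Finite :=
  (Finite.pi' fun _ => (Finset.Icc (-(⌊r⌋₊ : ℤ)) ⌊r⌋₊).finite_toSet).subset fun _ hk i =>
    apply_mem_Icc_of_mem_latticeSphere hk i

theorem one_le_of_mem_latticeSphere (hr : 0 < r) (hk : k ∈ latticeSphere n r) : 1 ≤ r := by
  obtain ⟨i, hi⟩ : ∃ i, k i ≠ 0 := by
    by_contra! h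
    have hsum := sum_sq_of_mem_latticeSphere hk
    simp only [h, Int.cast_zero, ne_eq, OfNat.ofNat_ne_zero, not_false_eq_true, zero_pow,
      Finset.sum_const_zero] at hsum
    exact (pow_pos hr 2).ne hsum
  calc (1 : ℝ) ≤ |(k i : ℝ)| := mod_cast Int.one_le_abs hi
    _ ≤ r := abs_apply_le_of_mem_latticeSphere hk i

theorem injOn_tail_nonneg_latticeSphere (m : ℕ) (r : ℝ) :
    InjOn (fun k : Fin (m + 1) → ℤ => (Fin.tail k, decide (0 ≤ k 0)))
      (latticeSphere (m + 1) r) := by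
  intro k hk l hl hkl
  simp only [Prod.mk.injEq, decide_eq_decide] at hkl
  obtain ⟨htail, hsign⟩ := hkl
  have hsum := (sum_sq_of_mem_latticeSphere hk).trans (sum_sq_of_mem_latticeSphere hl).symm
  have hsucc (i : Fin m) : k i.succ = l i.succ := congrFun htail i
  simp only [Fin.sum_univ_succ, hsucc, add_left_inj] at hsum
  have hzero : k 0 = l 0 := by
    rcases sq_eq_sq_iff_eq_or_eq_neg.1 (mod_cast hsum : k 0 ^ 2 = l 0 ^ 2) with h | h <;> omega
  exact funext (Fin.cases hzero hsucc)

theorem ncard_latticeSphere_succ_le (m : ℕ) (hr : 0 < r) :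
    ((latticeSphere (m + 1) r).ncard : ℝ) ≤ 2 * (3 * r) ^ m := by
  rcases (latticeSphere (m + 1) r).eq_empty_or_nonempty with hempty | ⟨k₀, hk₀⟩
  · rw [hempty, ncard_empty, Nat.cast_zero]
    positivity
  have hr_one : 1 ≤ r := one_le_of_mem_latticeSphere hr hk₀
  let box : Finset ((Fin m → ℤ) × Bool) :=
    (Fintype.piFinset fun _ => Finset.Icc (-(⌊r⌋₊ : ℤ)) ⌊r⌋₊) ×ˢ Finset.univ
  have hle_box : (latticeSphere (m + 1) r).ncard ≤ box.card := by
    rw [← ncard_coe_finset]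
    refine ncard_le_ncard_of_injOn _ (fun k hk => ?_) (injOn_tail_nonneg_latticeSphere m r)
    simpa only [box, Finset.coe_product, mem_prod, Finset.mem_coe, Fintype.mem_piFinset,
      Finset.mem_univ, and_true] using!
        fun i : Fin m => apply_mem_Icc_of_mem_latticeSphere hk i.succ
  have hside : (Finset.Icc (-(⌊r⌋₊ : ℤ)) ⌊r⌋₊).card = 2 * ⌊r⌋₊ + 1 := by
    rw [Int.card_Icc]
    omega
  have hbox : box.card = 2 * (2 * ⌊r⌋₊ + 1) ^ m := by
    simp [box, -Int.card_Icc, hside, mul_comm]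
  calc ((latticeSphere (m + 1) r).ncard : ℝ) ≤ 2 * (2 * ⌊r⌋₊ + 1) ^ m := by
        exact_mod_cast hle_box.trans_eq hbox
    _ ≤ 2 * (3 * r) ^ m := by
      gcongr
      linarith [Nat.floor_le hr.le]

end Lattice

section Cube

variable {n : ℕ} {F : Type*} [NormedAddCommGroup F]

theorem integrableOn_Qcube {f : EuclideanSpace ℝ (Fin n) → F} (hf : Continuous f) :
    IntegrableOn f (Qcube n) := by
  have hcompact : IsCompact (WithLp.toLp 2 '' Icc (0 : Fin n → ℝ) 1) :=
    isCompact_Icc.image (PiLp.continuous_toLp 2 _)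
  refine (hf.continuousOn.integrableOn_compact hcompact).mono_set fun x hx => ?_
  exact ⟨x.ofLp, ⟨fun i => (hx i).1, fun i => (hx i).2.le⟩, rfl⟩

variable [NormedSpace ℝ F]

theorem integral_Qcube_eq_integral_Icc (f : EuclideanSpace ℝ (Fin n) → F) :
    ∫ x in Qcube n, f x = ∫ x in Icc (0 : Fin n → ℝ) 1, f (WithLp.toLp 2 x) := by
  have hpre : WithLp.toLp 2 ⁻¹' Qcube n = univ.pi fun _ => Ico (0 : ℝ) 1 := by
    ext x
    simp [Qcube]
  have hIcc : (univ.pi fun _ : Fin n => Ico (0 : ℝ) 1) =ᵐ[volume] Icc 0 1 :=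
    Measure.univ_pi_Ico_ae_eq_Icc
  rw [← (PiLp.volume_preserving_toLp (Fin n)).setIntegral_preimage_emb
    (MeasurableEquiv.toLp 2 (Fin n → ℝ)).measurableEmbedding, hpre, setIntegral_congr_set hIcc]

/-- Invariance under translation by `ℤⁿ`, for functions with values in any type; the real-valued
case is `ZPeriodic`. -/
def LatticePeriodic {α : Type*} (f : EuclideanSpace ℝ (Fin n) → α) : Prop :=
  ∀ k : Fin n → ℤ, Function.Periodic f (latticePoint k)

protected theorem LatticePeriodic.fderiv {f : EuclideanSpace ℝ (Fin n) → F}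
    (hf : LatticePeriodic f) : LatticePeriodic (fderiv ℝ f) := fun k x => by
  rw [← fderiv_comp_add_right]
  exact congrArg (fderiv ℝ · x) (hf k).funext

theorem LatticePeriodic.insertNth_one_eq_insertNth_zero {m : ℕ} {α : Type*}
    {f : EuclideanSpace ℝ (Fin (m + 1)) → α} (hf : LatticePeriodic f) (i : Fin (m + 1))
    (y : Fin m → ℝ) :
    f (WithLp.toLp 2 (i.insertNth 1 y)) = f (WithLp.toLp 2 (i.insertNth 0 y)) := by
  rw [← hf (Pi.single i 1) (WithLp.toLp 2 (i.insertNth 0 y))]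
  congr 1
  ext j
  rcases Fin.eq_self_or_eq_succAbove i j with rfl | ⟨j, rfl⟩ <;>
    simp [latticePoint]

theorem LatticePeriodic.integral_Qcube_fderiv_apply_eq_zero
    {f : EuclideanSpace ℝ (Fin n) → F} (hf : LatticePeriodic f) (hf' : ContDiff ℝ 1 f)
    (v : EuclideanSpace ℝ (Fin n)) :
    ∫ x in Qcube n, fderiv ℝ f x v = 0 := by
  obtain _ | m := n
  · simp [Subsingleton.elim v 0]
  let toLp := (PiLp.continuousLinearEquiv 2 ℝ fun _ : Fin (m + 1) => ℝ).symm
  have hderiv (i : Fin (m + 1)) (x : Fin (m + 1) → ℝ) :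
      HasFDerivAt (fun y => v i • f (toLp y)) (v i • (fderiv ℝ f (toLp x)).comp
        toLp.toContinuousLinearMap) x :=
    (((hf'.differentiable one_ne_zero _).hasFDerivAt.comp x toLp.hasFDerivAt).const_smul (v i))
  have hdiv (x : Fin (m + 1) → ℝ) :
      ∑ i, (v i • (fderiv ℝ f (toLp x)).comp toLp.toContinuousLinearMap) (Pi.single i 1) =
        fderiv ℝ f (toLp x) v := by
    have hv : v = ∑ i, v i • toLp (Pi.single i 1) := by
      simpa using! ((EuclideanSpace.basisFun (Fin (m + 1)) ℝ).sum_repr v).symm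
    conv_rhs => rw [hv]
    simp
  have hcont : Continuous fun x => fderiv ℝ f (toLp x) v :=
    ((hf'.continuous_fderiv one_ne_zero).comp toLp.continuous).clm_apply continuous_const
  -- The flux of `f • v` out of the cube vanishes, because opposite faces contribute opposite terms.
  have hfaces := integral_divergence_of_hasFDerivAt_off_countable' (0 : Fin (m + 1) → ℝ) 1
    zero_le_one _ _ ∅ countable_empty
    (fun i x _ => (hderiv i x).continuousAt.continuousWithinAt) (fun x _ i => hderiv i x)
    (by simpa only [hdiv] using hcont.integrableOn_Icc)
  simp only [hdiv] at hfaces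
  rw [integral_Qcube_eq_integral_Icc]
  refine hfaces.trans (Finset.sum_eq_zero fun i _ => ?_)
  have hface (y : Fin m → ℝ) : f (toLp (i.insertNth 1 y)) = f (toLp (i.insertNth 0 y)) :=
    hf.insertNth_one_eq_insertNth_zero i y
  simp only [Pi.one_apply, Pi.zero_apply, hface, sub_self]

end Cube

section Torus

variable {n : ℕ}

/-- The quotient map from Euclidean space onto the torus `(ℝ/ℤ)ⁿ`, which transfers Mathlib's Fourier
series on `UnitAddTorus` to `ℤⁿ`-periodic functions. -/
def toTorus (x : EuclideanSpace ℝ (Fin n)) : UnitAddTorus (Fin n) :=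
  fun i => (x i : UnitAddCircle)

theorem isQuotientMap_toTorus : Topology.IsQuotientMap (toTorus (n := n)) :=
  (IsOpenQuotientMap.piMap fun _ => QuotientAddGroup.isOpenQuotientMap_mk).isQuotientMap.comp
    (PiLp.homeomorph 2 fun _ : Fin n => ℝ).isQuotientMap

theorem toTorus_eq_iff {x y : EuclideanSpace ℝ (Fin n)} :
    toTorus x = toTorus y ↔ ∃ k : Fin n → ℤ, x = y + latticePoint k := by
  have hcoord (s t : ℝ) : (s : UnitAddCircle) = t ↔ ∃ k : ℤ, s = t + k := by
    rw [← sub_eq_zero, ← AddCircle.coe_sub, AddCircle.coe_eq_zero_iff]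
    simp only [zsmul_one, sub_eq_iff_eq_add', eq_comm (a := ((_ : ℤ) : ℝ))]
  simp only [toTorus, funext_iff, hcoord, Classical.skolem, latticePoint, PiLp.ext_iff,
    PiLp.add_apply]

theorem mFourier_toTorus (k : Fin n → ℤ) (x : EuclideanSpace ℝ (Fin n)) :
    UnitAddTorus.mFourier k (toTorus x) = planeWave (latticePoint k) x := by
  simp only [UnitAddTorus.mFourier, toTorus, ContinuousMap.coe_mk, fourier_coe_apply, planeWave,
    fourierChar_apply, latticePoint, PiLp.inner_apply, ← Complex.exp_sum]
  congr 1
  push_cast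
  simp only [Finset.mul_sum, Finset.sum_mul]
  refine Finset.sum_congr rfl fun i _ => ?_
  simp
  ring

theorem latticePeriodic_planeWave (k : Fin n → ℤ) :
    LatticePeriodic (planeWave (latticePoint k)) := fun l x => by
  simp only [← mFourier_toTorus, toTorus_eq_iff.2 ⟨l, rfl⟩]

theorem integral_comp_toTorus {F : Type*} [NormedAddCommGroup F] [NormedSpace ℝ F]
    (g : UnitAddTorus (Fin n) → F) : ∫ x in Qcube n, g (toTorus x) = ∫ t, g t := by
  have hcube : {x : Fin n → ℝ | ∀ i, x i ∈ Ioc (0 : ℝ) (0 + 1)} =ᵐ[volume] Icc 0 1 := by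
    have h : (univ.pi fun _ : Fin n => Ioc (0 : ℝ) 1) =ᵐ[volume] Icc 0 1 :=
      Measure.univ_pi_Ioc_ae_eq_Icc
    simpa [pi] using! h
  rw [UnitAddTorus.integral_preimage g 0, integral_Qcube_eq_integral_Icc]
  exact (setIntegral_congr_set hcube).symm

theorem LatticePeriodic.exists_lift {α : Type*} [TopologicalSpace α]
    {f : EuclideanSpace ℝ (Fin n) → α} (hf : LatticePeriodic f) (hcont : Continuous f) :
    ∃ g : C(UnitAddTorus (Fin n), α), ∀ x, g (toTorus x) = f x := by
  have hquot : Topology.IsQuotientMap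
      (⟨toTorus, isQuotientMap_toTorus.continuous⟩ : C(_, UnitAddTorus (Fin n))) :=
    isQuotientMap_toTorus
  have hfactors : Function.FactorsThrough (⟨f, hcont⟩ : C(_, α)) toTorus := fun x y hxy => by
    obtain ⟨k, rfl⟩ := toTorus_eq_iff.1 hxy
    exact hf k y
  exact ⟨hquot.lift _ hfactors, fun x => DFunLike.congr_fun (hquot.lift_comp _ hfactors) x⟩

end Torus

section FourierCoefficients

variable {n : ℕ} {f : EuclideanSpace ℝ (Fin n) → ℂ}

/-- The Fourier coefficient with frequency `k` of a `ℤⁿ`-periodic function `f`. It is an integral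
over `Qcube n`, instead of Mathlib's `UnitAddTorus.mFourierCoeff`, so that it applies to partial
derivatives of `f` and to `Δ f`, which are functions on Euclidean space and not on the torus. -/
def cubeFourierCoeff (f : EuclideanSpace ℝ (Fin n) → ℂ) (k : Fin n → ℤ) : ℂ :=
  ∫ x in Qcube n, planeWave (latticePoint (-k)) x * f x

theorem mFourierCoeff_eq_cubeFourierCoeff {g : UnitAddTorus (Fin n) → ℂ}
    (hg : ∀ x, g (toTorus x) = f x) :
    UnitAddTorus.mFourierCoeff g = cubeFourierCoeff f := by
  ext k
  rw [UnitAddTorus.mFourierCoeff, ← integral_comp_toTorus]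
  simp only [mFourier_toTorus, hg, smul_eq_mul, cubeFourierCoeff]

theorem LatticePeriodic.hasSum_sq_cubeFourierCoeff (hf : LatticePeriodic f)
    (hcont : Continuous f) :
    HasSum (fun k => ‖cubeFourierCoeff f k‖ ^ 2) (∫ x in Qcube n, ‖f x‖ ^ 2) := by
  have : IsProbabilityMeasure (volume : Measure UnitAddCircle) :=
    inferInstanceAs (IsProbabilityMeasure AddCircle.haarAddCircle)
  obtain ⟨g, hg⟩ := hf.exists_lift hcont
  have hparseval := UnitAddTorus.hasSum_sq_mFourierCoeff (g.toLp (E := ℂ) 2 volume ℂ)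
  have hnorm : ∫ t, ‖g.toLp (E := ℂ) 2 volume ℂ t‖ ^ 2 = ∫ t, ‖g t‖ ^ 2 :=
    integral_congr_ae <| (g.coeFn_toLp (p := 2) (𝕜 := ℂ) volume).fun_comp (‖·‖ ^ 2)
  simpa only [hnorm, ← integral_comp_toTorus fun t => ‖g t‖ ^ 2, hg,
    UnitAddTorus.mFourierCoeff_toLp, mFourierCoeff_eq_cubeFourierCoeff hg] using hparseval

theorem LatticePeriodic.hasSum_cubeFourierCoeff_mul_planeWave (hf : LatticePeriodic f)
    (hcont : Continuous f) (hsum : Summable (cubeFourierCoeff f)) (x : EuclideanSpace ℝ (Fin n)) :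
    HasSum (fun k => cubeFourierCoeff f k * planeWave (latticePoint k) x) (f x) := by
  obtain ⟨g, hg⟩ := hf.exists_lift hcont
  rw [← mFourierCoeff_eq_cubeFourierCoeff hg] at hsum ⊢
  simpa only [hg, mFourier_toTorus, smul_eq_mul] using
    UnitAddTorus.hasSum_mFourier_series_apply_of_summable hsum (toTorus x)

theorem LatticePeriodic.cubeFourierCoeff_fderiv_apply (hf : LatticePeriodic f)
    (hf' : ContDiff ℝ 1 f) (v : EuclideanSpace ℝ (Fin n)) (k : Fin n → ℤ) :
    cubeFourierCoeff (fun x => fderiv ℝ f x v) k =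
      2 * π * Complex.I * ⟪latticePoint k, v⟫ * cubeFourierCoeff f k := by
  set e := planeWave (latticePoint (-k)) with he
  have he' : ContDiff ℝ 1 e := contDiff_planeWave _
  have hproduct (x : EuclideanSpace ℝ (Fin n)) : fderiv ℝ (fun y => e y * f y) x v =
      e x * fderiv ℝ f x v - 2 * π * Complex.I * ⟪latticePoint k, v⟫ * (e x * f x) := by
    rw [fderiv_fun_mul (he'.differentiable one_ne_zero x) (hf'.differentiable one_ne_zero x)]
    simp [he, fderiv_planeWave_apply, latticePoint_neg]
    ring
  have hperiodic : LatticePeriodic fun x => e x * f x := fun l =>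
    (latticePeriodic_planeWave (-k) l).mul (hf l)
  have hzero := hperiodic.integral_Qcube_fderiv_apply_eq_zero (he'.mul hf') v
  have hint₁ : IntegrableOn (fun x => e x * fderiv ℝ f x v) (Qcube n) :=
    integrableOn_Qcube <| he'.continuous.mul <|
      (hf'.continuous_fderiv one_ne_zero).clm_apply continuous_const
  have hint₂ : IntegrableOn (fun x => 2 * π * Complex.I * ⟪latticePoint k, v⟫ * (e x * f x))
      (Qcube n) :=
    integrableOn_Qcube (continuous_const.mul (he'.continuous.mul hf'.continuous))
  simp only [hproduct] at hzero
  rw [integral_sub hint₁ hint₂, integral_const_mul] at hzero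
  exact sub_eq_zero.1 hzero

theorem LatticePeriodic.norm_fderiv_le_of_cubeFourierCoeff_eq_zero (hf : LatticePeriodic f)
    (hcont : Continuous f) {S : Finset (Fin n → ℤ)} (hS : ∀ k ∉ S, cubeFourierCoeff f k = 0)
    {r : ℝ} (hr : 0 ≤ r) (hSr : ∀ k ∈ S, ‖latticePoint k‖ ≤ r) (x : EuclideanSpace ℝ (Fin n)) :
    ‖fderiv ℝ f x‖ ≤ 2 * π * r * √(S.card * ∫ y in Qcube n, ‖f y‖ ^ 2) := by
  have hexpansion : f = fun y => ∑ k ∈ S, cubeFourierCoeff f k * planeWave (latticePoint k) y := by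
    ext y
    refine (hf.hasSum_cubeFourierCoeff_mul_planeWave hcont
      (summable_of_ne_finset_zero hS) y).unique (hasSum_sum_of_ne_finset_zero fun k hk => ?_)
    rw [hS k hk, zero_mul]
  have hparseval : ∑ k ∈ S, ‖cubeFourierCoeff f k‖ ^ 2 = ∫ y in Qcube n, ‖f y‖ ^ 2 := by
    refine (hasSum_sum_of_ne_finset_zero fun k hk => ?_).unique
      (hf.hasSum_sq_cubeFourierCoeff hcont)
    rw [hS k hk, norm_zero, zero_pow two_ne_zero]
  calc ‖fderiv ℝ f x‖ ≤ 2 * π * r * ∑ k ∈ S, ‖cubeFourierCoeff f k‖ := by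
        conv_lhs => rw [hexpansion]
        exact norm_fderiv_sum_planeWave_le hSr _ x
    _ ≤ 2 * π * r * √(S.card * ∫ y in Qcube n, ‖f y‖ ^ 2) := by
        gcongr
        rw [← hparseval]
        exact Real.le_sqrt_of_sq_le sq_sum_le_card_mul_sum_sq

end FourierCoefficients

section Eigenfunctions

theorem laplacian_eq_sum_fderiv_fderiv {n : ℕ} {F : Type*} [NormedAddCommGroup F]
    [NormedSpace ℝ F] {f : EuclideanSpace ℝ (Fin n) → F} (hf : ContDiff ℝ 2 f)
    (x : EuclideanSpace ℝ (Fin n)) :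
    Δ f x = ∑ i, fderiv ℝ (fun y => fderiv ℝ f y (EuclideanSpace.single i 1)) x
      (EuclideanSpace.single i 1) := by
  have hdiff : DifferentiableAt ℝ (fderiv ℝ f) x :=
    (hf.fderiv_right (m := 1) (by norm_num)).differentiable one_ne_zero x
  simp [InnerProductSpace.laplacian_eq_iteratedFDeriv_orthonormalBasis f
    (EuclideanSpace.basisFun (Fin n) ℝ), iteratedFDeriv_two_apply,
    fderiv_clm_apply hdiff (differentiableAt_const _)]

variable {n : ℕ} {f : EuclideanSpace ℝ (Fin n) → ℂ} {lam : ℝ}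

theorem LatticePeriodic.cubeFourierCoeff_laplacian (hf : LatticePeriodic f)
    (hf' : ContDiff ℝ 2 f) (k : Fin n → ℤ) :
    cubeFourierCoeff (Δ f) k = -(2 * π * ‖latticePoint k‖) ^ 2 * cubeFourierCoeff f k := by
  let b := EuclideanSpace.basisFun (Fin n) ℝ
  have hderiv (v : EuclideanSpace ℝ (Fin n)) : ContDiff ℝ 1 fun y => fderiv ℝ f y v :=
    (hf'.fderiv_right (by norm_num)).clm_apply contDiff_const
  have hperiodic (v : EuclideanSpace ℝ (Fin n)) : LatticePeriodic fun y => fderiv ℝ f y v :=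
    fun l y => by simp only [hf.fderiv l y]
  have hsum : cubeFourierCoeff (Δ f) k =
      ∑ i, cubeFourierCoeff (fun x => fderiv ℝ (fun y => fderiv ℝ f y (b i)) x (b i)) k := by
    simp only [cubeFourierCoeff, laplacian_eq_sum_fderiv_fderiv hf', Finset.mul_sum]
    simp only [b, EuclideanSpace.basisFun_apply]
    refine integral_finsetSum _ fun i _ => integrableOn_Qcube ?_
    exact (contDiff_planeWave _ (k := 0)).continuous.mul <|
      ((hderiv _).continuous_fderiv one_ne_zero).clm_apply continuous_const
  have hpythagoras : ∑ i, (⟪latticePoint k, b i⟫ : ℂ) ^ 2 = (‖latticePoint k‖ : ℂ) ^ 2 :=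
    mod_cast b.sum_sq_inner_left (latticePoint k)
  calc cubeFourierCoeff (Δ f) k
      = ∑ i, (2 * π * Complex.I * ⟪latticePoint k, b i⟫) ^ 2 * cubeFourierCoeff f k := by
        rw [hsum]
        refine Finset.sum_congr rfl fun i _ => ?_
        rw [(hperiodic _).cubeFourierCoeff_fderiv_apply (hderiv _),
          hf.cubeFourierCoeff_fderiv_apply (hf'.of_le one_le_two)]
        ring
    _ = -(2 * π * ‖latticePoint k‖) ^ 2 * cubeFourierCoeff f k := by
        simp only [mul_pow, Complex.I_sq, ← Finset.sum_mul, ← Finset.mul_sum, hpythagoras]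
        ring

theorem LatticePeriodic.cubeFourierCoeff_eq_zero_of_laplacian_eq (hf : LatticePeriodic f)
    (hf' : ContDiff ℝ 2 f) (hlap : ∀ x, Δ f x = -lam ^ 2 * f x) (hlam : 0 ≤ lam) {k : Fin n → ℤ}
    (hk : k ∉ latticeSphere n (lam / (2 * π))) : cubeFourierCoeff f k = 0 := by
  have heigen : cubeFourierCoeff (Δ f) k = -lam ^ 2 * cubeFourierCoeff f k := by
    simp only [cubeFourierCoeff, hlap, mul_left_comm _ (-(lam : ℂ) ^ 2), integral_const_mul]
  rw [hf.cubeFourierCoeff_laplacian hf'] at heigen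
  refine (mul_eq_mul_right_iff.1 heigen).resolve_left fun hsq => hk ?_
  have hnorm : 2 * π * ‖latticePoint k‖ = lam :=
    (sq_eq_sq₀ (by positivity) hlam).1 (Complex.ofReal_injective (by simpa using hsq))
  rw [latticeSphere, mem_ofPred_eq, ← hnorm, mul_div_cancel_left₀ _ two_pi_pos.ne']

theorem LatticePeriodic.norm_fderiv_le_of_laplacian_eq (hf : LatticePeriodic f)
    (hf' : ContDiff ℝ 2 f) (hlap : ∀ x, Δ f x = -lam ^ 2 * f x) (hlam : 0 ≤ lam)
    (x : EuclideanSpace ℝ (Fin n)) :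
    ‖fderiv ℝ f x‖ ≤
      lam * √((latticeSphere n (lam / (2 * π))).ncard * ∫ y in Qcube n, ‖f y‖ ^ 2) := by
  have hfin := finite_latticeSphere n (lam / (2 * π))
  have hbound := hf.norm_fderiv_le_of_cubeFourierCoeff_eq_zero hf'.continuous (S := hfin.toFinset)
    (fun k hk => hf.cubeFourierCoeff_eq_zero_of_laplacian_eq hf' hlap hlam
      (mt hfin.mem_toFinset.2 hk))
    (by positivity) (fun k hk => (hfin.mem_toFinset.1 hk).le) x
  rwa [mul_div_cancel₀ _ two_pi_pos.ne', ← ncard_eq_toFinset_card _ hfin] at hbound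

end Eigenfunctions

theorem mul_sqrt_pow_eq_rpow {a : ℝ} (ha : 0 ≤ a) (m : ℕ) :
    a * √(a ^ m) = a ^ (1 + (m : ℝ) / 2) := by
  have hsqrt : √(a ^ m) = a ^ ((m : ℝ) / 2) := by
    rw [sqrt_eq_rpow, ← rpow_natCast_mul ha, mul_one_div]
  rw [hsqrt, rpow_one_add' ha (by positivity)]

theorem gradient_sup_bound_general (n : ℕ) :
    ∃ C : ℝ, 0 < C ∧
      ∀ lam : ℝ, 0 < lam →
        ∀ f : EuclideanSpace ℝ (Fin n) → ℂ, ContDiff ℝ 2 f → LatticePeriodic f →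
          (∀ x, Δ f x = -lam ^ 2 * f x) →
          ∀ x, ‖fderiv ℝ f x‖ ≤
            C * lam ^ (((n : ℝ) + 1) / 2) * √(∫ y in Qcube n, ‖f y‖ ^ 2) := by
  obtain _ | m := n
  · refine ⟨1, one_pos, fun lam hlam f _ _ _ x => ?_⟩
    rw [Subsingleton.elim (fderiv ℝ f x) 0, norm_zero]
    positivity
  refine ⟨√(2 * 3 ^ m), by positivity, fun lam hlam f hf hper hlap x => ?_⟩
  have hcard : ((latticeSphere (m + 1) (lam / (2 * π))).ncard : ℝ) ≤ 2 * 3 ^ m * lam ^ m := by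
    calc _ ≤ 2 * (3 * (lam / (2 * π))) ^ m := ncard_latticeSphere_succ_le m (by positivity)
      _ ≤ 2 * (3 * lam) ^ m := by
          gcongr
          exact div_le_self hlam.le (by linarith [two_le_pi])
      _ = 2 * 3 ^ m * lam ^ m := by ring
  have hexponent : (((m + 1 : ℕ) : ℝ) + 1) / 2 = 1 + (m : ℝ) / 2 := by
    push_cast
    ring
  calc ‖fderiv ℝ f x‖ ≤ _ := hper.norm_fderiv_le_of_laplacian_eq hf hlap hlam.le x
    _ ≤ lam * √(2 * 3 ^ m * lam ^ m * ∫ y in Qcube (m + 1), ‖f y‖ ^ 2) := by gcongr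
    _ = √(2 * 3 ^ m) * lam ^ ((((m + 1 : ℕ) : ℝ) + 1) / 2) *
          √(∫ y in Qcube (m + 1), ‖f y‖ ^ 2) := by
        rw [Real.sqrt_mul (by positivity), Real.sqrt_mul (by positivity),
          hexponent, ← mul_sqrt_pow_eq_rpow hlam.le]
        ring

section RealValued

variable {n : ℕ} {φ : EuclideanSpace ℝ (Fin n) → ℝ}

theorem ZPeriodic.latticePeriodic_ofReal (hφ : ZPeriodic φ) :
    LatticePeriodic fun x => (φ x : ℂ) :=
  fun k x => congrArg Complex.ofReal (hφ x k)

theorem laplacian_ofReal_eq_lap (hφ : ContDiff ℝ 2 φ) (x : EuclideanSpace ℝ (Fin n)) :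
    Δ (fun y => (φ y : ℂ)) x = lap φ x := by
  rw [lap, ← laplacian_eq_sum_fderiv_fderiv hφ]
  exact hφ.contDiffAt.laplacian_CLM_comp_left (l := Complex.ofRealCLM)

theorem norm_fderiv_ofReal_eq_norm_gradient (hφ : Differentiable ℝ φ)
    (x : EuclideanSpace ℝ (Fin n)) :
    ‖fderiv ℝ (fun y => (φ y : ℂ)) x‖ = ‖gradient φ x‖ := by
  have hcomp : fderiv ℝ (fun y => (φ y : ℂ)) x =
      Complex.ofRealLI.toContinuousLinearMap.comp (fderiv ℝ φ x) :=
    (Complex.ofRealCLM.hasFDerivAt.comp x (hφ x).hasFDerivAt).fderiv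
  rw [hcomp, LinearIsometry.norm_toContinuousLinearMap_comp, gradient, LinearIsometryEquiv.norm_map]

end RealValued

theorem gradient_sup_bound (n : ℕ) (hn : 2 ≤ n) :
    ∃ C : ℝ, 0 < C ∧
      ∀ (lam : ℝ), 0 < lam →
        ∀ (φ : EuclideanSpace ℝ (Fin n) → ℝ), ContDiff ℝ (⊤ : ℕ∞) φ → ZPeriodic φ →
          (∀ x, lap φ x = -lam ^ 2 * φ x) → (∫ x in Qcube n, (φ x) ^ 2) = 1 →
          ∀ x, ‖gradient φ x‖ ≤ C * lam ^ (((n : ℝ) + 1) / 2) := by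
  obtain ⟨C, hC, hbound⟩ := gradient_sup_bound_general n
  refine ⟨C, hC, fun lam hlam φ hφ hper hlap hnorm x => ?_⟩
  have hφ' : ContDiff ℝ 2 φ := hφ.of_le (by norm_cast)
  have hlap' (y : EuclideanSpace ℝ (Fin n)) : Δ (fun z => (φ z : ℂ)) y = -lam ^ 2 * φ y := by
    simp [laplacian_ofReal_eq_lap hφ', hlap y]
  have hbound_φ := hbound lam hlam (fun y => φ y) (Complex.ofRealCLM.contDiff.comp hφ')
    hper.latticePeriodic_ofReal hlap' x
  simpa only [norm_fderiv_ofReal_eq_norm_gradient (hφ'.differentiable two_ne_zero),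
    Complex.norm_real, norm_eq_abs, sq_abs, hnorm, sqrt_one, mul_one] using hbound_φ
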